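/- Let R be a Gorenstein local ring, c ≥ 1 an integer, and M, N finitely generated R-modules such that M satisfies (S_c), N satisfies (S_{c−1}), M ⊗_R N satisfies (S_c), and M_p is free for all primes p of height ≤ c − 1. Let M_0 = M and for i = 1,...,c let 0 → M_{i−1} → F_i → M_i → 0 be the successive pushforwards. Then Tor_i^R(M_c, N) = 0 for i = 1,...,c. -/

import Mathlib

open CategoryTheory

/-- The `i`-th Tor group of two modules over a commutative ring, as an object of `ModuleCat`. -/
noncomputable abbrev TorGrp (A : Type) [CommRing A] (i : ℕ)
    (M N : Type) [AddCommGroup M] [Module A M] [AddCommGroup N] [Module A N] :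
    ModuleCat.{0} A :=
  ((Tor (ModuleCat.{0} A) i).obj (ModuleCat.of A M)).obj (ModuleCat.of A N)

open scoped Classical in
/-- The depth of a module over a local ring (`⊤` for the zero module). -/
noncomputable def moduleDepth (R M : Type) [CommRing R] [IsLocalRing R]
    [AddCommGroup M] [Module R M] : ℕ∞ :=
  if Subsingleton M then ⊤
  else sSup {n : ℕ∞ | ∃ l : List R, (l.length : ℕ∞) = n ∧
    (∀ x ∈ l, x ∈ IsLocalRing.maximalIdeal R) ∧ RingTheory.Sequence.IsRegular M l}

/-- The minimal number of generators of a module. -/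
noncomputable def minGens (R M : Type*) [Ring R] [AddCommGroup M] [Module R M] : ℕ :=
  sInf {n : ℕ | ∃ s : Finset M, s.card = n ∧ Submodule.span R (s : Set M) = ⊤}

/-- A Gorenstein local ring: a Noetherian local ring of finite self-injective dimension. -/
def IsGorensteinLocal (R : Type) [CommRing R] [IsLocalRing R] : Prop :=
  IsNoetherianRing R ∧ ∃ n : ℕ, ∀ (X : ModuleCat.{0} R) (i : ℕ), n < i →
    Subsingleton (((Ext R (ModuleCat.{0} R) i).obj (Opposite.op X)).obj (ModuleCat.of R R))

/-- Serre's condition `(S_n)`:  `depth M_q ≥ min{n, dim R_q}` for all primes `q`. -/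
def SerreCond (R M : Type) [CommRing R] [AddCommGroup M] [Module R M] (n : ℕ) : Prop :=
  ∀ (q : Ideal R) [q.IsPrime],
    min ((n : WithBot ℕ∞)) (ringKrullDim (Localization.AtPrime q)) ≤
      (↑(moduleDepth (Localization.AtPrime q) (LocalizedModule q.primeCompl M)) : WithBot ℕ∞)

/-!
Surjectivity of `F^* → A^*` makes a pushforward `0 → A → F → C → 0` split wherever `A` is locally
projective, so every `M_j` stays projective in height `≤ c - 1`, and there `M_j ⊗ N` is locally at
least as deep as `N`. In larger height the depth lemma costs one step per pushforward, so
`M_j ⊗ N` satisfies `(S_{c-j})`.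

For `j < c` the associated primes of `M_j ⊗ N` therefore have height `0`, where the pushforward
splits. Hence `M_j ⊗ N → F_{j+1} ⊗ N` is injective, which means `Tor_1(M_{j+1}, N) = 0`, and
dimension shifting along the pushforwards gives the higher `Tor_i(M_c, N)`.
-/

open IsLocalRing RingTheory.Sequence TensorProduct

section Depth

variable {R M : Type} [CommRing R] [IsLocalRing R] [AddCommGroup M] [Module R M]

lemma exists_isRegular_of_le_moduleDepth [Nontrivial M] {n : ℕ} (h : n ≤ moduleDepth R M) :
    ∃ l : List R, n ≤ l.length ∧ (∀ x ∈ l, x ∈ maximalIdeal R) ∧ IsRegular M l := by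
  obtain _ | n := n
  · exact ⟨[], by simp, by simp, .nil R M⟩
  rw [moduleDepth, if_neg (not_subsingleton M)] at h
  obtain ⟨_, ⟨l, rfl, hl⟩, hn⟩ :=
    lt_sSup_iff.mp (lt_of_lt_of_le (Nat.cast_lt.mpr n.lt_succ_self) h)
  exact ⟨l, Nat.cast_lt.mp hn, hl⟩

lemma length_le_moduleDepth {l : List R} (hl : ∀ x ∈ l, x ∈ maximalIdeal R)
    (hreg : IsRegular M l) : l.length ≤ moduleDepth R M := by
  have := hreg.nontrivial
  rw [moduleDepth, if_neg (not_subsingleton M)]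
  exact le_sSup ⟨l, rfl, hl, hreg⟩

lemma moduleDepth_eq_top [Subsingleton M] : moduleDepth R M = ⊤ :=
  if_pos ‹_›

lemma moduleDepth_le_of_forall_isRegular {M' : Type} [AddCommGroup M'] [Module R M']
    [Nontrivial M]
    (h : ∀ l : List R, (∀ x ∈ l, x ∈ maximalIdeal R) → IsRegular M l → IsRegular M' l) :
    moduleDepth R M ≤ moduleDepth R M' := by
  refine ENat.forall_natCast_le_iff_le.mp fun n hn ↦ ?_
  obtain ⟨l, hlen, hl, hreg⟩ := exists_isRegular_of_le_moduleDepth hn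
  exact (Nat.cast_le.mpr hlen).trans (length_le_moduleDepth hl (h l hl hreg))

lemma moduleDepth_congr {M' : Type} [AddCommGroup M'] [Module R M'] (e : M ≃ₗ[R] M') :
    moduleDepth R M = moduleDepth R M' := by
  obtain _ | _ := subsingleton_or_nontrivial M
  · have := e.symm.toEquiv.subsingleton
    simp only [moduleDepth_eq_top]
  · have := e.symm.toEquiv.nontrivial
    simp only [moduleDepth, not_subsingleton, if_false, e.isRegular_congr]

lemma moduleDepth_le_moduleDepth_tensor (P : Type) [AddCommGroup P] [Module R P]
    [Module.Finite R P] [Module.Flat R P] [Module.Finite R M] :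
    moduleDepth R M ≤ moduleDepth R (P ⊗[R] M) := by
  obtain _ | _ := subsingleton_or_nontrivial (P ⊗[R] M)
  · simp only [moduleDepth_eq_top, le_top]
  have : Nontrivial M := by
    by_contra h
    have := not_nontrivial_iff_subsingleton.mp h
    exact not_subsingleton (P ⊗[R] M) inferInstance
  refine moduleDepth_le_of_forall_isRegular fun l hl hreg ↦ ?_
  exact (isRegular_iff_isWeaklyRegular_of_subset_maximalIdeal hl).mpr
    hreg.toIsWeaklyRegular.isWeaklyRegular_lTensor

lemma support_quotient_maximalIdeal :
    Module.support R (R ⧸ maximalIdeal R) = PrimeSpectrum.zeroLocus (maximalIdeal R) := by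
  rw [Module.support_eq_zeroLocus, Ideal.annihilator_quotient]

lemma le_moduleDepth_iff_subsingleton_ext [IsNoetherianRing R] [Module.Finite R M] [Nontrivial M]
    {n : ℕ} :
    n ≤ moduleDepth R M ↔ ∀ i < n, Subsingleton
      (Abelian.Ext (ModuleCat.of R (R ⧸ maximalIdeal R)) (ModuleCat.of R M) i) := by
  have hlt : maximalIdeal R • (⊤ : Submodule R M) < ⊤ :=
    lt_top_iff_ne_top.mpr (Submodule.top_ne_ideal_smul_of_le_jacobson_annihilator
      (maximalIdeal_le_jacobson _)).symm
  constructor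
  · intro h i hi
    obtain ⟨l, hlen, hl, hreg⟩ := exists_isRegular_of_le_moduleDepth h
    exact ModuleCat.subsingleton_ext_of_exists_isRegular (maximalIdeal R) _
      support_quotient_maximalIdeal.subset (ModuleCat.of R M) hlt l hl hreg i (hi.trans_le hlen)
  · intro h
    obtain ⟨l, rfl, hl, hreg⟩ := ModuleCat.exists_isRegular_of_exists_subsingleton_ext
      (maximalIdeal R) n (ModuleCat.of R M) hlt _ support_quotient_maximalIdeal h
    exact length_le_moduleDepth hl hreg

lemma le_moduleDepth_iff [IsNoetherianRing R] [Module.Finite R M] {n : ℕ} :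
    n ≤ moduleDepth R M ↔ ∀ i < n, Subsingleton
      (Abelian.Ext (ModuleCat.of R (R ⧸ maximalIdeal R)) (ModuleCat.of R M) i) := by
  obtain _ | _ := subsingleton_or_nontrivial M
  · have hzero : Limits.IsZero (ModuleCat.of R M) := ModuleCat.isZero_of_subsingleton _
    simp only [moduleDepth_eq_top, le_top, true_iff]
    exact fun i _ ↦ subsingleton_of_forall_eq 0 fun x ↦ by
      rw [← x.comp_mk₀_id, hzero.eq_zero_of_src (𝟙 _), Abelian.Ext.mk₀_zero, Abelian.Ext.comp_zero]
  · exact le_moduleDepth_iff_subsingleton_ext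

lemma le_moduleDepth_of_exact [IsNoetherianRing R] {A B C : Type}
    [AddCommGroup A] [Module R A] [AddCommGroup B] [Module R B] [Module.Finite R B]
    [AddCommGroup C] [Module R C]
    {f : A →ₗ[R] B} {g : B →ₗ[R] C} (hf : Function.Injective f) (hg : Function.Surjective g)
    (hfg : Function.Exact f g) {n : ℕ} (hA : (n + 1 : ℕ) ≤ moduleDepth R A)
    (hB : n ≤ moduleDepth R B) : n ≤ moduleDepth R C := by
  have := Module.Finite.of_injective f hf
  have := Module.Finite.of_surjective g hg
  rw [le_moduleDepth_iff] at hA hB ⊢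
  intro i hi
  have hS := ModuleCat.shortComplex_shortExact
    (ModuleCat.shortComplexOfCompEqZero f g hfg.linearMap_comp_eq_zero) hfg hf hg
  have := hA (i + 1) (by omega)
  have := hB i hi
  refine subsingleton_of_forall_eq 0 fun x ↦ ?_
  obtain ⟨y, rfl⟩ := Abelian.Ext.covariant_sequence_exact₃ _ hS x rfl (Subsingleton.elim _ _)
  rw [Subsingleton.elim y 0, Abelian.Ext.zero_comp]

lemma maximalIdeal_notMem_associatedPrimes [IsNoetherianRing R] (h : 1 ≤ moduleDepth R M) :
    maximalIdeal R ∉ associatedPrimes R M := by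
  intro hmem
  obtain _ | _ := subsingleton_or_nontrivial M
  · exact not_isAssociatedPrime_of_subsingleton hmem
  obtain ⟨l, hlen, hl, hreg⟩ := exists_isRegular_of_le_moduleDepth (n := 1) h
  obtain ⟨r, l, rfl⟩ := List.exists_cons_of_length_pos hlen
  have hr : r ∈ {r : R | ∃ x : M, x ≠ 0 ∧ r • x = 0} := by
    rw [← biUnion_associatedPrimes_eq_zero_divisors]
    exact Set.mem_biUnion hmem (hl r List.mem_cons_self)
  obtain ⟨x, hx, hrx⟩ := hr
  exact hx (((isRegular_cons_iff M r l).mp hreg).1.right_eq_zero_of_smul hrx)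

end Depth

section Localization

variable {R : Type*} [CommRing R] (S : Submonoid R)

/-- The canonical isomorphism `(A ⊗ N)_S ≃ A_S ⊗ N_S` over the localized ring `R_S`. -/
noncomputable def localizedTensorEquiv (A N : Type*) [AddCommGroup A] [Module R A]
    [AddCommGroup N] [Module R N] :
    LocalizedModule S (A ⊗[R] N) ≃ₗ[Localization S]
      LocalizedModule S A ⊗[Localization S] LocalizedModule S N :=
  (IsLocalizedModule.linearEquiv S (LocalizedModule.mkLinearMap S (A ⊗[R] N))
      (TensorProduct.map (LocalizedModule.mkLinearMap S A)
        (LocalizedModule.mkLinearMap S N))).extendScalarsOfIsLocalization S (Localization S) ≪≫ₗ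
    (IsLocalization.moduleTensorEquiv S (Localization S) _ _).symm

variable {A F C : Type*} [AddCommGroup A] [Module R A] [AddCommGroup F] [Module R F]
  [AddCommGroup C] [Module R C]

lemma localizedTensorEquiv_mk_tmul (N : Type*) [AddCommGroup N] [Module R N] (a : A) (n : N) :
    localizedTensorEquiv S A N (LocalizedModule.mk (a ⊗ₜ n) 1) =
      LocalizedModule.mk a 1 ⊗ₜ LocalizedModule.mk n 1 := by
  rw [localizedTensorEquiv, LinearEquiv.trans_apply, LinearEquiv.symm_apply_eq]
  exact IsLocalizedModule.linearEquiv_apply S (LocalizedModule.mkLinearMap S (A ⊗[R] N))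
    (TensorProduct.map (LocalizedModule.mkLinearMap S A) (LocalizedModule.mkLinearMap S N)) (a ⊗ₜ n)

lemma localizedTensorEquiv_map_rTensor (N : Type*) [AddCommGroup N] [Module R N] (f : A →ₗ[R] F)
    (x : LocalizedModule S (A ⊗[R] N)) :
    localizedTensorEquiv S F N (LocalizedModule.map S (f.rTensor N) x) =
      (LocalizedModule.map S f).rTensor (LocalizedModule S N) (localizedTensorEquiv S A N x) := by
  have h : ((localizedTensorEquiv S F N).toLinearMap ∘ₗ
      LocalizedModule.map S (f.rTensor N)).restrictScalars R =
      ((LocalizedModule.map S f).rTensor (LocalizedModule S N) ∘ₗ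
        (localizedTensorEquiv S A N).toLinearMap).restrictScalars R := by
    refine IsLocalizedModule.linearMap_ext S (LocalizedModule.mkLinearMap S (A ⊗[R] N))
      (((localizedTensorEquiv S F N).restrictScalars R).toLinearMap ∘ₗ
        LocalizedModule.mkLinearMap S (F ⊗[R] N)) ?_
    ext a n
    simp [LocalizedModule.map_mk, localizedTensorEquiv_mk_tmul]
  exact LinearMap.congr_fun h x

end Localization

section Pushforward

variable {R : Type*} [CommRing R] {A F C : Type*} [AddCommGroup A] [Module R A]
  [AddCommGroup F] [Module R F] [AddCommGroup C] [Module R C]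

/-- A pushforward of `A`: a short exact sequence `0 → A → F → C → 0` whose `R`-dual
`F^* → A^*` is surjective. Minimality of the cover `F^* → A^*`, and freeness of `F`, are not part
of the structure. -/
structure IsPushforward (ι : A →ₗ[R] F) (pr : F →ₗ[R] C) : Prop where
  injective : Function.Injective ι
  surjective : Function.Surjective pr
  exact : Function.Exact ι pr
  dualMap_surjective : Function.Surjective ι.dualMap

lemma dualMap_surjective_of_apply_eq {n : Type*} [Finite n] [DecidableEq n]
    {π : (n → R) →ₗ[R] Module.Dual R A} (hπ : Function.Surjective π) {ι : A →ₗ[R] (n → R)}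
    (h : ∀ a j, ι a j = π (Pi.single j 1) a) : Function.Surjective ι.dualMap := by
  have := Fintype.ofFinite n
  intro φ
  obtain ⟨v, rfl⟩ := hπ φ
  refine ⟨Fintype.linearCombination R v, LinearMap.ext fun a ↦ ?_⟩
  calc ι.dualMap (Fintype.linearCombination R v) a = ∑ j, ι a j * v j := rfl
    _ = ∑ j, v j * π (Pi.single j 1) a := by simp only [h, mul_comm]
    _ = π (∑ j, v j • Pi.single j 1) a := by simp
    _ = π v a := by rw [← pi_eq_sum_univ']

/-- The functional `A_S → R_S` induced by a functional `A → R`. -/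
noncomputable abbrev localizedDual (S : Submonoid R) (A : Type*) [AddCommGroup A] [Module R A] :
    Module.Dual R A →ₗ[R] Module.Dual (Localization S) (LocalizedModule S A) :=
  IsLocalizedModule.mapExtendScalars S (LocalizedModule.mkLinearMap S A)
    (Algebra.linearMap R (Localization S)) (Localization S)

lemma dualMap_localizedDual (S : Submonoid R) (ι : A →ₗ[R] F) (χ : Module.Dual R F) :
    (LocalizedModule.map S ι).dualMap (localizedDual S F χ) = localizedDual S A (ι.dualMap χ) := by
  refine LinearMap.restrictScalars_injective R <| IsLocalizedModule.linearMap_ext S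
    (LocalizedModule.mkLinearMap S A) (Algebra.linearMap R (Localization S)) ?_
  ext a
  simp [LocalizedModule.map, -LocalizedModule.mkLinearMap_apply]

lemma dualMap_localizedModuleMap_surjective (S : Submonoid R) [Module.FinitePresentation R A]
    {ι : A →ₗ[R] F} (hι : Function.Surjective ι.dualMap) :
    Function.Surjective (LocalizedModule.map S ι).dualMap := by
  intro φ
  obtain ⟨⟨ψ, s⟩, hψ : s • φ = localizedDual S A ψ⟩ :=
    IsLocalizedModule.surj S (localizedDual S A) φ
  obtain ⟨χ, rfl⟩ := hι ψ
  have hs : Localization.mk 1 s * algebraMap R (Localization S) s = 1 := by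
    rw [← Localization.mk_one_eq_algebraMap, Localization.mk_mul, one_mul, mul_one,
      Localization.mk_self]
  refine ⟨Localization.mk 1 s • localizedDual S F χ, ?_⟩
  rw [map_smul, dualMap_localizedDual, ← hψ, Submonoid.smul_def,
    ← algebraMap_smul (Localization S) (s : R) φ, smul_smul, hs, one_smul]

namespace IsPushforward

variable {ι : A →ₗ[R] F} {pr : F →ₗ[R] C}

lemma localizedModule [Module.FinitePresentation R A] (h : IsPushforward ι pr) (S : Submonoid R) :
    IsPushforward (LocalizedModule.map S ι) (LocalizedModule.map S pr) where
  injective := LocalizedModule.map_injective S ι h.injective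
  surjective := LocalizedModule.map_surjective S pr h.surjective
  exact := LocalizedModule.map_exact S ι pr h.exact
  dualMap_surjective := dualMap_localizedModuleMap_surjective S h.dualMap_surjective

lemma exists_comp_eq_id [Module.Finite R A] [Module.Projective R A] (h : IsPushforward ι pr) :
    ∃ r : F →ₗ[R] A, r ∘ₗ ι = LinearMap.id := by
  obtain ⟨n, f, g, -, -, hfg⟩ := Module.Finite.exists_comp_eq_id_of_projective R A
  choose χ hχ using fun j ↦ h.dualMap_surjective (LinearMap.proj j ∘ₗ g)
  have hg : LinearMap.pi χ ∘ₗ ι = g := LinearMap.ext fun a ↦ funext fun j ↦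
    LinearMap.congr_fun (hχ j) a
  exact ⟨f ∘ₗ LinearMap.pi χ, by rw [LinearMap.comp_assoc, hg, hfg]⟩

lemma projective [Module.Finite R A] [Module.Projective R A] [Module.Projective R F]
    (h : IsPushforward ι pr) : Module.Projective R C := by
  obtain ⟨s, hs⟩ : ∃ s, pr ∘ₗ s = LinearMap.id :=
    ((h.exact.split_tfae h.injective h.surjective).out 1 0).mp h.exists_comp_eq_id
  exact .of_split s pr hs

end IsPushforward

/-- `A` is projective, equivalently (for finite `A`) free, at every prime of height `≤ n`; in the
paper's terms, `A` is free on `X^n(R)`. -/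
def IsProjectiveOnHeightLE (R A : Type*) [CommRing R] [AddCommGroup A] [Module R A] (n : ℕ) :
    Prop :=
  ∀ (q : Ideal R) [q.IsPrime], q.height ≤ n →
    Module.Projective (Localization.AtPrime q) (LocalizedModule q.primeCompl A)

lemma IsProjectiveOnHeightLE.mono {m n : ℕ} (hmn : m ≤ n) (h : IsProjectiveOnHeightLE R A n) :
    IsProjectiveOnHeightLE R A m :=
  fun q _ hq ↦ h q (hq.trans (mod_cast hmn))

lemma IsProjectiveOnHeightLE.of_linearEquiv {n : ℕ} (e : A ≃ₗ[R] C)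
    (h : IsProjectiveOnHeightLE R A n) : IsProjectiveOnHeightLE R C n := fun q _ hq ↦
  have := h q hq
  .of_equiv (IsLocalizedModule.mapEquiv q.primeCompl (LocalizedModule.mkLinearMap q.primeCompl A)
    (LocalizedModule.mkLinearMap q.primeCompl C) (Localization.AtPrime q) e)

lemma isProjectiveOnHeightLE_of_forall_free {n : ℕ}
    (h : ∀ (q : Ideal R) [q.IsPrime], ringKrullDim (Localization.AtPrime q) ≤ n →
      Module.Free (Localization.AtPrime q) (LocalizedModule q.primeCompl A)) :
    IsProjectiveOnHeightLE R A n := fun q _ hq ↦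
  have := h q <| by
    rw [IsLocalization.AtPrime.ringKrullDim_eq_height q (Localization.AtPrime q)]
    exact_mod_cast hq
  inferInstance

lemma IsPushforward.isProjectiveOnHeightLE [Module.FinitePresentation R A] [Module.Projective R F]
    {ι : A →ₗ[R] F} {pr : F →ₗ[R] C} (h : IsPushforward ι pr) {n : ℕ}
    (hA : IsProjectiveOnHeightLE R A n) : IsProjectiveOnHeightLE R C n := fun q _ hq ↦
  have := hA q hq
  (h.localizedModule q.primeCompl).projective

end Pushforward

section Serre

lemma serreCond_iff_height {R M : Type} [CommRing R] [AddCommGroup M] [Module R M] {n : ℕ} :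
    SerreCond R M n ↔ ∀ (q : Ideal R) [q.IsPrime], min (n : ℕ∞) q.height ≤
      moduleDepth (Localization.AtPrime q) (LocalizedModule q.primeCompl M) := by
  refine forall₂_congr fun q _ ↦ ?_
  rw [IsLocalization.AtPrime.ringKrullDim_eq_height q (Localization.AtPrime q)]
  norm_cast

namespace SerreCond

variable {R M : Type} [CommRing R] [AddCommGroup M] [Module R M]

lemma mono {m n : ℕ} (hmn : m ≤ n) (h : SerreCond R M n) : SerreCond R M m :=
  fun q _ ↦ (min_le_min_right _ (mod_cast hmn)).trans (h q)

lemma of_linearEquiv {M' : Type} [AddCommGroup M'] [Module R M'] {n : ℕ} (e : M ≃ₗ[R] M')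
    (h : SerreCond R M n) : SerreCond R M' n := by
  intro q _
  rw [← moduleDepth_congr (IsLocalizedModule.mapEquiv q.primeCompl
    (LocalizedModule.mkLinearMap q.primeCompl M) (LocalizedModule.mkLinearMap q.primeCompl M')
    (Localization.AtPrime q) e)]
  exact h q

lemma height_eq_zero [IsNoetherianRing R] {n : ℕ} (hn : 1 ≤ n) (h : SerreCond R M n)
    {q : Ideal R} [q.IsPrime] (hq : q ∈ associatedPrimes R M) : q.height = 0 := by
  by_contra hpos
  have hdepth : 1 ≤ moduleDepth (Localization.AtPrime q) (LocalizedModule q.primeCompl M) :=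
    (le_min (Nat.one_le_cast.mpr hn) (Order.one_le_iff_ne_zero.mpr hpos)).trans
      (serreCond_iff_height.mp h q)
  exact maximalIdeal_notMem_associatedPrimes hdepth
    (Module.associatedPrimes.mem_associatedPrimes_atPrime_of_mem_associatedPrimes hq)

end SerreCond

lemma injective_of_forall_associatedPrimes {R : Type*} [CommRing R] [IsNoetherianRing R]
    {A B : Type*} [AddCommGroup A] [Module R A] [AddCommGroup B] [Module R B] (f : A →ₗ[R] B)
    (h : ∀ (q : Ideal R) [q.IsPrime], q ∈ associatedPrimes R A →
      Function.Injective (LocalizedModule.map q.primeCompl f)) :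
    Function.Injective f := by
  rw [← LinearMap.ker_eq_bot]
  by_contra hne
  have : Nontrivial (LinearMap.ker f) := Submodule.nontrivial_iff_ne_bot.mpr hne
  obtain ⟨q, hq⟩ := associatedPrimes.nonempty R (LinearMap.ker f)
  obtain ⟨_, ⟨x, hfx⟩, hx⟩ := isAssociatedPrime_iff.mp hq
  have hqA : q ∈ associatedPrimes R A :=
    associatedPrimes.subset_of_injective (LinearMap.ker f).injective_subtype hq
  have hx0 : LocalizedModule.mk x (1 : q.primeCompl) = 0 := h q hqA <| by
    rw [LocalizedModule.map_mk, LinearMap.mem_ker.mp hfx, map_zero, LocalizedModule.zero_mk]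
  obtain ⟨s, hs⟩ := (IsLocalizedModule.eq_zero_iff q.primeCompl
    (LocalizedModule.mkLinearMap q.primeCompl A)).mp hx0
  exact s.2 (hx.ge (Submodule.mem_colon_singleton.mpr (Subtype.ext hs)))

lemma moduleDepth_localizedModule_le_tensor {R : Type} [CommRing R] (q : Ideal R) [q.IsPrime]
    (P N : Type) [AddCommGroup P] [Module R P] [Module.Finite R P] [AddCommGroup N] [Module R N]
    [Module.Finite R N] [Module.Projective (Localization.AtPrime q)
      (LocalizedModule q.primeCompl P)] :
    moduleDepth (Localization.AtPrime q) (LocalizedModule q.primeCompl N) ≤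
      moduleDepth (Localization.AtPrime q) (LocalizedModule q.primeCompl (P ⊗[R] N)) := by
  rw [moduleDepth_congr (localizedTensorEquiv q.primeCompl P N)]
  exact moduleDepth_le_moduleDepth_tensor (LocalizedModule q.primeCompl P)

namespace IsPushforward

variable {R A N F C : Type} [CommRing R] [AddCommGroup A] [Module R A]
  [AddCommGroup N] [Module R N] [AddCommGroup F] [Module R F] [AddCommGroup C] [Module R C]
  {ι : A →ₗ[R] F} {pr : F →ₗ[R] C}

lemma localizedModuleMap_rTensor_injective [Module.FinitePresentation R A]
    (h : IsPushforward ι pr) (S : Submonoid R)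
    [Module.Projective (Localization S) (LocalizedModule S A)] :
    Function.Injective (LocalizedModule.map S (ι.rTensor N)) := by
  obtain ⟨r, hr⟩ := (h.localizedModule S).exists_comp_eq_id
  have hinj : Function.Injective ((LocalizedModule.map S ι).rTensor (LocalizedModule S N)) :=
    Function.LeftInverse.injective (g := r.rTensor _) fun x ↦ by
      rw [← LinearMap.rTensor_comp_apply, hr, LinearMap.rTensor_id_apply]
  refine .of_comp (f := localizedTensorEquiv S F N) ?_
  simpa only [Function.comp_def, localizedTensorEquiv_map_rTensor] using
    hinj.comp (localizedTensorEquiv S A N).injective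

variable [IsNoetherianRing R] [Module.Finite R A]

lemma rTensor_injective (h : IsPushforward ι pr) {n : ℕ} (hn : 1 ≤ n)
    (hAN : SerreCond R (A ⊗[R] N) n) (hA : IsProjectiveOnHeightLE R A 0) :
    Function.Injective (ι.rTensor N) :=
  injective_of_forall_associatedPrimes _ fun q _ hq ↦
    have := Module.finitePresentation_of_finite R A
    have := hA q (hAN.height_eq_zero hn hq).le
    h.localizedModuleMap_rTensor_injective q.primeCompl

lemma serreCond_tensor [Module.Finite R N] [Module.Finite R F] [Module.Projective R F]
    (h : IsPushforward ι pr) {n : ℕ} (hAN : SerreCond R (A ⊗[R] N) (n + 1))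
    (hN : SerreCond R N n) (hA : IsProjectiveOnHeightLE R A n) :
    SerreCond R (C ⊗[R] N) n := by
  have := Module.finitePresentation_of_finite R A
  have := Module.Finite.of_surjective pr h.surjective
  rw [serreCond_iff_height]
  intro q _
  have hNq := serreCond_iff_height.mp hN q
  obtain hq | hq := le_or_gt q.height n
  · have := h.isProjectiveOnHeightLE hA q hq
    exact hNq.trans (moduleDepth_localizedModule_le_tensor q C N)
  have hinj := h.rTensor_injective (Nat.le_add_left 1 n) hAN (hA.mono n.zero_le)
  have hANq := serreCond_iff_height.mp hAN q
  rw [min_eq_left (mod_cast Order.add_one_le_of_lt hq)] at hANq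
  rw [min_eq_left hq.le] at hNq ⊢
  exact le_moduleDepth_of_exact
    (LocalizedModule.map_injective q.primeCompl _ hinj)
    (LocalizedModule.map_surjective q.primeCompl _ (LinearMap.rTensor_surjective N h.surjective))
    (LocalizedModule.map_exact q.primeCompl _ _ (rTensor_exact N h.exact h.surjective)) hANq
    (hNq.trans (moduleDepth_localizedModule_le_tensor q F N))

end IsPushforward

end Serre

section Tor

lemma lTensor_rTensor_apply {R A B P Q : Type*} [CommRing R] [AddCommGroup A] [Module R A]
    [AddCommGroup B] [Module R B] [AddCommGroup P] [Module R P] [AddCommGroup Q] [Module R Q]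
    (f : A →ₗ[R] B) (d : P →ₗ[R] Q) (x : A ⊗[R] P) :
    d.lTensor B (f.rTensor P x) = f.rTensor Q (d.lTensor A x) := by
  rw [← LinearMap.comp_apply, ← LinearMap.comp_apply, LinearMap.lTensor_comp_rTensor,
    LinearMap.rTensor_comp_lTensor]

lemma lTensor_exact_of_exact_of_injective {R A B C P₂ P₁ P₀ Q : Type*} [CommRing R]
    [AddCommGroup A] [Module R A] [AddCommGroup B] [Module R B] [AddCommGroup C] [Module R C]
    [AddCommGroup P₂] [Module R P₂] [AddCommGroup P₁] [Module R P₁] [AddCommGroup P₀] [Module R P₀]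
    [AddCommGroup Q] [Module R Q] {f : A →ₗ[R] B} {g : B →ₗ[R] C} (hg : Function.Surjective g)
    (hfg : Function.Exact f g) {d₂ : P₂ →ₗ[R] P₁} {d₁ : P₁ →ₗ[R] P₀} {d₀ : P₀ →ₗ[R] Q}
    (hd : d₀ ∘ₗ d₁ = 0) (hB : Function.Exact (d₂.lTensor B) (d₁.lTensor B))
    (hA : Function.Exact (d₁.lTensor A) (d₀.lTensor A)) (hfQ : Function.Injective (f.rTensor Q)) :
    Function.Exact (d₂.lTensor C) (d₁.lTensor C) := by
  refine .of_comp_of_mem_range (funext fun z ↦ ?_) fun z hz ↦ ?_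
  · obtain ⟨b, rfl⟩ := LinearMap.rTensor_surjective P₂ hg z
    simp only [Function.comp_apply, lTensor_rTensor_apply, hB.apply_apply_eq_zero, map_zero,
      Pi.zero_apply]
  obtain ⟨b, rfl⟩ := LinearMap.rTensor_surjective P₁ hg z
  rw [lTensor_rTensor_apply] at hz
  obtain ⟨a, ha⟩ := (rTensor_exact P₀ hfg hg _).mp hz
  have had₀ : d₀.lTensor A a = 0 := hfQ <| by
    rw [← lTensor_rTensor_apply, ha, ← LinearMap.lTensor_comp_apply, hd, LinearMap.lTensor_zero,
      LinearMap.zero_apply, map_zero]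
  obtain ⟨a', rfl⟩ := (hA _).mp had₀
  have hbd₁ : d₁.lTensor B (b - f.rTensor P₁ a') = 0 := by
    rw [map_sub, lTensor_rTensor_apply, ha, sub_self]
  obtain ⟨b', hb'⟩ := (hB _).mp hbd₁
  refine ⟨g.rTensor P₂ b', ?_⟩
  rw [lTensor_rTensor_apply, hb', map_sub, (rTensor_exact P₁ hfg hg).apply_apply_eq_zero, sub_zero]

variable {R N : Type} [CommRing R] [AddCommGroup N] [Module R N]

lemma projectiveResolution_exact (P : ProjectiveResolution (ModuleCat.of R N)) (i : ℕ) :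
    Function.Exact (P.complex.d (i + 2) (i + 1)).hom (P.complex.d (i + 1) i).hom :=
  (ShortComplex.ShortExact.moduleCat_exact_iff_function_exact _).mp (P.exact_succ i)

lemma projectiveResolution_flat (P : ProjectiveResolution (ModuleCat.of R N)) (i : ℕ) :
    Module.Flat R (P.complex.X i) :=
  have : Module.Projective R (P.complex.X i) :=
    (IsProjective.iff_projective _).mpr (P.projective i)
  inferInstance

lemma subsingleton_tor_succ_iff_exact {A : Type} [AddCommGroup A] [Module R A]
    (P : ProjectiveResolution (ModuleCat.of R N)) (i : ℕ) :
    Subsingleton (TorGrp R (i + 1) A N) ↔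
      Function.Exact ((P.complex.d (i + 2) (i + 1)).hom.lTensor A)
        ((P.complex.d (i + 1) i).hom.lTensor A) := by
  rw [← ModuleCat.isZero_iff_subsingleton]
  refine (P.isoLeftDerivedObj ((MonoidalCategory.tensoringLeft (ModuleCat R)).obj
    (ModuleCat.of R A)) (i + 1)).isZero_iff.trans ?_
  change Limits.IsZero (HomologicalComplex.homology _ _) ↔ _
  rw [← HomologicalComplex.exactAt_iff_isZero_homology,
    HomologicalComplex.exactAt_iff' _ (i + 2) (i + 1) i (ChainComplex.prev _ _)
      (ChainComplex.next_nat_succ i), ShortComplex.ShortExact.moduleCat_exact_iff_function_exact]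
  rfl

variable {A B C : Type} [AddCommGroup A] [Module R A] [AddCommGroup B] [Module R B]
  [Module.Flat R B] [AddCommGroup C] [Module R C] {f : A →ₗ[R] B} {g : B →ₗ[R] C}

lemma subsingleton_tor_one_of_injective_rTensor (hg : Function.Surjective g)
    (hfg : Function.Exact f g) (hf : Function.Injective (f.rTensor N)) :
    Subsingleton (TorGrp R 1 C N) := by
  let P := projectiveResolution (ModuleCat.of R N)
  have hP := projectiveResolution_exact P 0
  have hε : Function.Exact (P.complex.d 1 0).hom (P.π.f 0).hom :=
    (ShortComplex.ShortExact.moduleCat_exact_iff_function_exact _).mp P.exact₀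
  have hε_surj : Function.Surjective (P.π.f 0).hom :=
    (ModuleCat.epi_iff_surjective _).mp inferInstance
  exact (subsingleton_tor_succ_iff_exact P 0).mpr <|
    lTensor_exact_of_exact_of_injective hg hfg hε.linearMap_comp_eq_zero
      (Module.Flat.lTensor_exact B hP) (lTensor_exact A hε hε_surj) hf

lemma subsingleton_tor_succ_succ (hf : Function.Injective f) (hg : Function.Surjective g)
    (hfg : Function.Exact f g) {i : ℕ} (h : Subsingleton (TorGrp R (i + 1) A N)) :
    Subsingleton (TorGrp R (i + 2) C N) := by
  let P := projectiveResolution (ModuleCat.of R N)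
  have := projectiveResolution_flat P i
  rw [subsingleton_tor_succ_iff_exact P] at h ⊢
  exact lTensor_exact_of_exact_of_injective hg hfg
    (projectiveResolution_exact P i).linearMap_comp_eq_zero
    (Module.Flat.lTensor_exact B (projectiveResolution_exact P (i + 1))) h
    (Module.Flat.rTensor_preserves_injective_linearMap f hf)

lemma subsingleton_tor_of_forall_injective_rTensor {c : ℕ} {M : Fin (c + 1) → Type}
    [∀ j, AddCommGroup (M j)] [∀ j, Module R (M j)] {F : Fin c → Type}
    [∀ j, AddCommGroup (F j)] [∀ j, Module R (F j)] [∀ j, Module.Flat R (F j)]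
    {ι : ∀ j : Fin c, M j.castSucc →ₗ[R] F j} {pr : ∀ j : Fin c, F j →ₗ[R] M j.succ}
    (hinj : ∀ j, Function.Injective (ι j)) (hsurj : ∀ j, Function.Surjective (pr j))
    (hexact : ∀ j, Function.Exact (ι j) (pr j))
    (hN : ∀ j, Function.Injective ((ι j).rTensor N)) (j : Fin (c + 1)) :
    ∀ i : ℕ, 1 ≤ i → i ≤ j → Subsingleton (TorGrp R i (M j) N) := by
  induction j using Fin.induction with
  | zero => exact fun i hi hi' ↦ absurd (hi.trans hi') (Nat.not_succ_le_zero 0)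
  | succ j ih =>
    rintro (_ | _ | i) hi hij
    · exact absurd hi (Nat.not_succ_le_zero 0)
    · exact subsingleton_tor_one_of_injective_rTensor (hsurj j) (hexact j) (hN j)
    · exact subsingleton_tor_succ_succ (hinj j) (hsurj j) (hexact j)
        (ih (i + 1) i.succ_pos (Nat.le_of_succ_le_succ hij))

end Tor

theorem stmt18_general {R N : Type} [CommRing R] [IsNoetherianRing R] [AddCommGroup N] [Module R N]
    [Module.Finite R N] {c : ℕ} {M : Fin (c + 1) → Type} [∀ j, AddCommGroup (M j)]
    [∀ j, Module R (M j)] [∀ j, Module.Finite R (M j)] {F : Fin c → Type}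
    [∀ j, AddCommGroup (F j)] [∀ j, Module R (F j)] [∀ j, Module.Finite R (F j)]
    [∀ j, Module.Projective R (F j)] {ι : ∀ j : Fin c, M j.castSucc →ₗ[R] F j}
    {pr : ∀ j : Fin c, F j →ₗ[R] M j.succ} (h : ∀ j, IsPushforward (ι j) (pr j))
    (hN : SerreCond R N (c - 1)) (hMN : SerreCond R (M 0 ⊗[R] N) c)
    (hM : IsProjectiveOnHeightLE R (M 0) (c - 1)) (i : ℕ) (hi : 1 ≤ i) (hic : i ≤ c) :
    Subsingleton (TorGrp R i (M (Fin.last c)) N) := by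
  have hproj (j : Fin (c + 1)) : IsProjectiveOnHeightLE R (M j) (c - 1) := by
    induction j using Fin.induction with
    | zero => exact hM
    | succ j ih =>
      have := Module.finitePresentation_of_finite R (M j.castSucc)
      exact (h j).isProjectiveOnHeightLE ih
  have hserre (j : Fin (c + 1)) : SerreCond R (M j ⊗[R] N) (c - j) := by
    induction j using Fin.induction with
    | zero => exact hMN
    | succ j ih =>
      have hj : c - j = c - (j + 1) + 1 := by omega
      have hle : c - (j + 1) ≤ c - 1 := by omega
      exact (h j).serreCond_tensor (hj ▸ ih) (hN.mono hle) ((hproj _).mono hle)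
  have hinj (j : Fin c) : Function.Injective ((ι j).rTensor N) :=
    (h j).rTensor_injective (Nat.sub_pos_of_lt j.isLt) (hserre j.castSucc)
      ((hproj _).mono (Nat.zero_le _))
  exact subsingleton_tor_of_forall_injective_rTensor (fun j ↦ (h j).injective)
    (fun j ↦ (h j).surjective) (fun j ↦ (h j).exact) hinj (Fin.last c) i hi hic

/-- Let `R` be Gorenstein local, `c ≥ 1`, and `M, N` finitely generated `R`-modules with `M`
satisfying `(S_c)`, `N` satisfying `(S_{c−1})`, `M ⊗_R N` satisfying `(S_c)`, and `M_p` free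
for all primes of height `≤ c − 1`.  If `M_0 = M` and `0 → M_{i−1} → F_i → M_i → 0`
(`i = 1,…,c`) are the successive pushforwards, then `Tor_i^R(M_c, N) = 0` for `i = 1,…,c`. -/
theorem stmt18 (R : Type) [CommRing R] [IsLocalRing R] (hGor : IsGorensteinLocal R)
    (c : ℕ) (hc : 1 ≤ c)
    (M N : Type) [AddCommGroup M] [Module R M] [Module.Finite R M]
    [AddCommGroup N] [Module R N] [Module.Finite R N]
    (hSM : SerreCond R M c) (hSN : SerreCond R N (c - 1))
    (hSMN : SerreCond R (TensorProduct R M N) c)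
    (hfree : ∀ (P : Ideal R) [P.IsPrime],
      ringKrullDim (Localization.AtPrime P) ≤ ((c - 1 : ℕ) : WithBot ℕ∞) →
      Module.Free (Localization.AtPrime P) (LocalizedModule P.primeCompl M))
    -- the sequence of successive pushforwards `M_0 = M, M_1, …, M_c`
    (Mseq : Fin (c + 1) → Type)
    [∀ i, AddCommGroup (Mseq i)] [∀ i, Module R (Mseq i)] [∀ i, Module.Finite R (Mseq i)]
    (e₀ : Mseq 0 ≃ₗ[R] M)
    (lam : Fin c → ℕ)
    (π : ∀ i : Fin c, (Fin (lam i) → R) →ₗ[R] Module.Dual R (Mseq i.castSucc))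
    (hπ : ∀ i, Function.Surjective (π i))
    (hlam : ∀ i, lam i = minGens R (Module.Dual R (Mseq i.castSucc)))
    (ι : ∀ i : Fin c, Mseq i.castSucc →ₗ[R] (Fin (lam i) → R))
    (pr : ∀ i : Fin c, (Fin (lam i) → R) →ₗ[R] Mseq i.succ)
    (hι : ∀ (i : Fin c) (m : Mseq i.castSucc) (j : Fin (lam i)),
      ι i m j = π i (Pi.single j 1) m)
    (hinj : ∀ i, Function.Injective (ι i))
    (hsurj : ∀ i, Function.Surjective (pr i))
    (hexact : ∀ i, Function.Exact (ι i) (pr i)) :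
    ∀ i : ℕ, 1 ≤ i → i ≤ c → Subsingleton (TorGrp R i (Mseq (Fin.last c)) N) := by
  have := hGor.1
  exact stmt18_general
    (fun i ↦ ⟨hinj i, hsurj i, hexact i, dualMap_surjective_of_apply_eq (hπ i) (hι i)⟩) hSN
    (hSMN.of_linearEquiv (e₀.symm.rTensor N))
    ((isProjectiveOnHeightLE_of_forall_free hfree).of_linearEquiv e₀.symm)
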